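/- Let n be a positive integer and let (k_1,…,k_n) be integers. For j ∈ {1,…,n} define everywhere-defined maps ε_{k_j[j]} and ς_{1[j]} on L_n × ℤ by: ε_{k_j[j]}(j,i) = (j, i+1) for i > k_j, ε_{k_j[j]}(j,i) = (j,i) for i ≤ k_j, and ε_{k_j[j]}(m,i) = (m,i) for m ≠ j; ς_{1[j]}(j,i) = (j, i+1) and ς_{1[j]}(m,i) = (m,i) for m ≠ j. Then the set {ε_{k_1[1]}, …, ε_{k_n[n]}, ς_{1[1]}, …, ς_{1[n]}} generates IO_∞(ℤ^n_lex) as an inverse semigroup: the smallest subset of IO_∞(ℤ^n_lex) containing these 2n elements and closed under composition of partial maps and under taking the inverse partial map equals IO_∞(ℤ^n_lex). In particular, IO_∞(ℤ^n_lex) is finitely generated as an inverse semigroup. -/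

import Mathlib

/-- Composition of partial selfmaps (left map applied first):
`dom (PComp f g) = {x ∈ dom f : f x ∈ dom g}` and `(PComp f g) x = g (f x)`. -/
def PComp {X : Type*} (f g : X → Option X) : X → Option X := fun x => (f x).bind g

/-- The identity partial selfmap (everywhere defined). -/
def PId {X : Type*} : X → Option X := fun x => some x

/-- A partial selfmap is injective. -/
def PInj {X : Type*} (f : X → Option X) : Prop :=
  ∀ ⦃x y a : X⦄, f x = some a → f y = some a → x = y

/-- A partial selfmap is monotone with respect to the relation `r`. -/
def PMono {X : Type*} (r : X → X → Prop) (f : X → Option X) : Prop :=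
  ∀ ⦃x y a b : X⦄, r x y → f x = some a → f y = some b → r a b

/-- The domain of a partial selfmap is cofinite. -/
def DomCof {X : Type*} (f : X → Option X) : Prop := {x | f x = none}.Finite

/-- The range (image) of a partial selfmap is cofinite. -/
def RanCof {X : Type*} (f : X → Option X) : Prop := {y | ∀ x, f x ≠ some y}.Finite

/-- `IOmap r f` says that `f` is a monotone (w.r.t. `r`) injective partial selfmap
with cofinite domain and cofinite image, i.e. an element of `IO_∞`. -/
def IOmap {X : Type*} (r : X → X → Prop) (f : X → Option X) : Prop :=
  PInj f ∧ PMono r f ∧ DomCof f ∧ RanCof f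

/-- The lexicographic order on `L_n × ℤ` (with `L_n = Fin n`):
`(i,m) ≤ (j,k)` iff `i < j`, or `i = j` and `m ≤ k`. -/
def lexLe (n : ℕ) (p q : Fin n × ℤ) : Prop :=
  p.1 < q.1 ∨ (p.1 = q.1 ∧ p.2 ≤ q.2)

/-- The domain of a partial selfmap, as a set. -/
def pdom {X : Type*} (f : X → Option X) : Set X := {x | ∃ y, f x = some y}

/-- The range (image) of a partial selfmap, as a set. -/
def pran {X : Type*} (f : X → Option X) : Set X := {y | ∃ x, f x = some y}

/-- The partial selfmap `ε_{k[j]}` of `L_n × ℤ`: everywhere defined, shifting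
`(j, i) ↦ (j, i+1)` for `i > k` and fixing everything else. -/
def epsL (n : ℕ) (k : ℤ) (j : Fin n) : Fin n × ℤ → Option (Fin n × ℤ) :=
  fun x => some (if x.1 = j ∧ k < x.2 then (x.1, x.2 + 1) else x)

/-- The partial selfmap `ς_{1[j]}` of `L_n × ℤ`: the translation `(j, i) ↦ (j, i+1)`
on the `j`-th line, fixing all other lines. -/
def sigL (n : ℕ) (j : Fin n) : Fin n × ℤ → Option (Fin n × ℤ) :=
  fun x => some (if x.1 = j then (x.1, x.2 + 1) else x)

def shL (n : ℕ) (c : Fin n → ℤ) : Fin n × ℤ → Option (Fin n × ℤ) :=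
  fun x => some (x.1, x.2 + c x.1)

open Classical in
noncomputable def pinv {X : Type*} (f : X → Option X) : X → Option X :=
  fun y => if h : ∃ x, f x = some y then some h.choose else none

theorem pinv_spec {X : Type*} (f : X → Option X) (hf : PInj f) (x y : X) :
    f x = some y ↔ pinv f y = some x := by
  unfold pinv
  constructor
  · intro h
    have h' : ∃ x, f x = some y := ⟨x, h⟩
    rw [dif_pos h']
    exact congrArg some (hf h'.choose_spec h)
  · intro h
    split_ifs at h with h'
    have := h'.choose_spec
    rw [Option.some.inj h] at this
    exact this

theorem lexLe_total (n : ℕ) (p q : Fin n × ℤ) : lexLe n p q ∨ lexLe n q p := by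
  unfold lexLe; grind

theorem lexLe_antisymm (n : ℕ) (p q : Fin n × ℤ) (h : lexLe n p q) (h' : lexLe n q p) : p = q := by
  unfold lexLe at *
  ext <;> grind

theorem pinv_none {X : Type*} (f : X → Option X) (y : X) :
    pinv f y = none ↔ ∀ x, f x ≠ some y := by
  unfold pinv
  split_ifs with h
  · simpa using h
  · simpa using h

theorem pinv_good (n : ℕ) (f : Fin n × ℤ → Option (Fin n × ℤ)) (hf : IOmap (lexLe n) f) :
    IOmap (lexLe n) (pinv f) := by
  obtain ⟨h1, h2, h3, h4⟩ := hf
  have hs := pinv_spec f h1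
  refine ⟨?_, ?_, ?_, ?_⟩
  · intro x y a hx hy
    rw [← hs] at hx hy
    rw [hx] at hy
    exact Option.some.inj hy
  · intro x y a b hr hx hy
    rw [← hs] at hx hy
    rcases lexLe_total n a b with h | h
    · exact h
    · have := lexLe_antisymm n _ _ hr (h2 h hy hx)
      subst this
      rw [h1 hx hy]
      rw [h1 hx hy] at h
      exact h
  · unfold DomCof
    simp only [pinv_none]
    exact h4
  · refine h3.subset ?_
    intro y hy
    simp only [Set.mem_setOf_eq] at *
    by_contra hne
    obtain ⟨a, ha⟩ := Option.ne_none_iff_exists'.1 hne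
    exact hy a ((hs _ _).1 ha)

/-- monotone bijections are shifts -/
theorem base_aux (n : ℕ) (g : Fin n × ℤ → Fin n × ℤ) (hi : Function.Injective g)
    (hsu : Function.Surjective g) (hm : ∀ x y, lexLe n x y → lexLe n (g x) (g y)) :
    ∃ c : Fin n → ℤ, ∀ x, g x = (x.1, x.2 + c x.1) := by
  have hS : ∀ j i, g (j, i + 1) = ((g (j, i)).1, (g (j, i)).2 + 1) := by
    intro j i
    have a1 : lexLe n (g (j, i)) (g (j, i + 1)) := hm _ _ (by simp [lexLe])
    have a2 : g (j, i) ≠ g (j, i + 1) := by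
      intro h
      have := hi h
      simp at this
    obtain ⟨z, hz⟩ := hsu ((g (j, i)).1, (g (j, i)).2 + 1)
    have a3 : ¬ lexLe n z (j, i) := by
      intro h
      have := hm _ _ h
      rw [hz] at this
      simp [lexLe] at this
    have a4 : lexLe n (j, i + 1) z := by
      unfold lexLe at *
      grind
    have a5 := hm _ _ a4
    rw [hz] at a5
    refine lexLe_antisymm n _ _ a5 ?_
    generalize g (j, i + 1) = u at *
    generalize g (j, i) = v at *
    obtain ⟨u1, u2⟩ := u
    obtain ⟨v1, v2⟩ := v
    unfold lexLe at *
    simp only [ne_eq, Prod.mk.injEq] at *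
    grind
  have hA : ∀ j i, g (j, i) = ((g (j, 0)).1, i + (g (j, 0)).2) := by
    intro j i
    induction i using Int.induction_on with
    | zero => simp
    | succ i ih => rw [hS, ih]; ext <;> simp; ring
    | pred i ih =>
      have := hS j (-i - 1)
      rw [sub_add_cancel, ih] at this
      simp only [Prod.mk.injEq] at this
      ext
      · exact congrArg Fin.val this.1.symm
      · simp; linarith [this.2]
  let σ : Fin n → Fin n := fun j => (g (j, 0)).1
  have hσm : Monotone σ := by
    intro a b hab
    have := hm (a, 0) (b, 0) (by unfold lexLe; simp; exact lt_or_eq_of_le hab)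
    rcases this with h | h
    · exact h.le
    · exact h.1.le
  have hσs : Function.Surjective σ := by
    intro b
    obtain ⟨⟨j, i⟩, hz⟩ := hsu (b, 0)
    rw [hA] at hz
    exact ⟨j, congrArg Prod.fst hz⟩
  have hσ : ∀ j, σ j = j := by
    have hst : StrictMono σ := hσm.strictMono_of_injective (Finite.injective_iff_surjective.2 hσs)
    intro j
    have := Subsingleton.elim (hst.orderIsoOfSurjective σ hσs) (OrderIso.refl (Fin n))
    exact congrArg (fun e : Fin n ≃o Fin n => e j) this
  refine ⟨fun j => (g (j, 0)).2, ?_⟩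
  rintro ⟨j, i⟩
  rw [hA]
  exact Prod.ext (hσ j) rfl

theorem eps_inj (n : ℕ) (a : ℤ) (j : Fin n) : PInj (epsL n a j) := by
  rintro ⟨x1, x2⟩ ⟨y1, y2⟩ b hx hy
  unfold epsL at *
  rw [← hy] at hx
  have := Option.some.inj hx
  ext <;> grind

theorem eps_mono (n : ℕ) (a : ℤ) (j : Fin n) : PMono (lexLe n) (epsL n a j) := by
  rintro ⟨x1, x2⟩ ⟨y1, y2⟩ b c h hx hy
  unfold epsL at *
  rw [← Option.some.inj hx, ← Option.some.inj hy]
  unfold lexLe at *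
  grind

theorem eps_ran (n : ℕ) (a : ℤ) (j : Fin n) (y : Fin n × ℤ) (hy : y ≠ (j, a)) :
    ∃ x, epsL n (a - 1) j x = some y := by
  obtain ⟨y1, y2⟩ := y
  unfold epsL
  by_cases h : y1 = j ∧ a < y2
  · refine ⟨(y1, y2 - 1), ?_⟩
    rw [if_pos ⟨h.1, by simp; omega⟩]
    simp
  · refine ⟨(y1, y2), ?_⟩
    rw [if_neg]
    rintro ⟨h1, h2⟩
    simp only [ne_eq, Prod.mk.injEq] at *
    apply h
    refine ⟨h1, ?_⟩
    have : y2 ≠ a := fun h => hy ⟨h1, h⟩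
    omega

theorem eps_notran (n : ℕ) (a : ℤ) (j : Fin n) (x : Fin n × ℤ) :
    epsL n (a - 1) j x ≠ some (j, a) := by
  obtain ⟨y1, y2⟩ := x
  unfold epsL
  intro h
  have := Option.some.inj h
  grind

theorem reduce_dom (n : ℕ) (T : Set (Fin n × ℤ → Option (Fin n × ℤ)))
    (he : ∀ a j, epsL n a j ∈ T)
    (hcomp : ∀ f ∈ T, ∀ g ∈ T, PComp f g ∈ T)
    (hinv : ∀ f ∈ T, ∀ g : Fin n × ℤ → Option (Fin n × ℤ),
      (∀ x y : Fin n × ℤ, f x = some y ↔ g y = some x) → g ∈ T)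
    (C : Set (Fin n × ℤ))
    (hC : ∀ f, IOmap (lexLe n) f → {y | ∀ x, f x ≠ some y} = C → (∀ x, f x ≠ none) → f ∈ T) :
    ∀ N : ℕ, ∀ f, IOmap (lexLe n) f → {y | ∀ x, f x ≠ some y} = C →
      {x | f x = none}.ncard = N → f ∈ T := by
  intro N
  induction N using Nat.strong_induction_on with
  | _ N ih =>
  intro f hf hfC hN
  by_cases hd : ∀ x, f x ≠ none
  · exact hC f hf hfC hd
  push Not at hd
  obtain ⟨⟨j, a⟩, hja⟩ := hd
  set e := epsL n (a - 1) j with he_def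
  have hei : PInj e := eps_inj n _ j
  have hsp := pinv_spec e hei
  obtain ⟨h1, h2, h3, h4⟩ := hf
  have hval : ∀ x, ∃ y, e x = some y := fun x => ⟨_, rfl⟩
  choose u hu using hval
  have hui : Function.Injective u := by
    intro x y h
    exact hei (hu x) (by rw [hu y, h])
  have hc : ∀ x, PComp e f x = f (u x) := by
    intro x
    simp [PComp, hu]
  have hdomr : ∀ x y, f x = some y → ∃ z, u z = x := by
    intro x y hxy
    have : x ≠ (j, a) := by
      rintro rfl
      rw [hja] at hxy
      cases hxy
    obtain ⟨z, hz⟩ := eps_ran n a j x this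
    refine ⟨z, ?_⟩
    rw [← he_def, hu] at hz
    exact Option.some.inj hz
  have hran : {y | ∀ x, PComp e f x ≠ some y} = {y | ∀ x, f x ≠ some y} := by
    ext y
    simp only [Set.mem_setOf_eq, hc]
    constructor
    · intro h x hx
      obtain ⟨z, rfl⟩ := hdomr x y hx
      exact h z hx
    · intro h x
      exact h _
  have him : u '' {x | PComp e f x = none} ⊆ {x | f x = none} \ {(j, a)} := by
    rintro _ ⟨x, hx, rfl⟩
    refine ⟨by simpa [hc] using hx, ?_⟩
    intro h
    have h' : u x = (j, a) := h
    exact eps_notran n a j x (by rw [← he_def, hu, h'])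
  have hfin : {x | PComp e f x = none}.Finite := by
    refine Set.Finite.of_finite_image (f := u) ?_ hui.injOn
    exact (h3.subset Set.diff_subset).subset him
  have hmapf : IOmap (lexLe n) (PComp e f) := by
    refine ⟨?_, ?_, hfin, ?_⟩
    · intro x y b hx hy
      rw [hc] at hx hy
      exact hui (h1 hx hy)
    · intro x y b c hxy hx hy
      rw [hc] at hx hy
      exact h2 (eps_mono n _ j hxy (hu x) (hu y)) hx hy
    · unfold RanCof
      rw [hran]
      exact h4
  have hlt : {x | PComp e f x = none}.ncard < N := by
    rw [← hN, ← Set.ncard_image_of_injective _ hui]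
    refine lt_of_le_of_lt (Set.ncard_le_ncard him (h3.subset Set.diff_subset)) ?_
    exact Set.ncard_diff_singleton_lt_of_mem hja h3
  have hmem := ih _ hlt (PComp e f) hmapf (hran.trans hfC) rfl
  have heT : e ∈ T := he _ _
  have hfe : f = PComp (pinv e) (PComp e f) := by
    funext x
    by_cases hx : f x = none
    · rw [hx]
      cases hp : pinv e x with
      | none => simp [PComp, hp]
      | some z =>
        have := (hsp _ _).2 hp
        simp [PComp, hp, this, hx]
    · obtain ⟨y, hy⟩ := Option.ne_none_iff_exists'.1 hx
      obtain ⟨z, rfl⟩ := hdomr x y hy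
      have hp := (hsp _ _).1 (hu z)
      simp [PComp, hp, hu]
  rw [hfe]
  exact hcomp _ (hinv _ heT _ hsp) _ hmem

/-- `{ε_{k_1[1]}, …, ε_{k_n[n]}, ς_{1[1]}, …, ς_{1[n]}}` generates `IO_∞(ℤ^n_lex)` as
an inverse semigroup: every subset of `IO_∞(ℤ^n_lex)` containing these `2n` elements
and closed under composition of partial maps and under taking the inverse partial map
is all of `IO_∞(ℤ^n_lex)`. In particular `IO_∞(ℤ^n_lex)` is finitely generated as an
inverse semigroup. -/
theorem stmt17 (n : ℕ) (hn : 0 < n) (k : Fin n → ℤ)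
    (T : Set (Fin n × ℤ → Option (Fin n × ℤ)))
    (hT : ∀ f ∈ T, IOmap (lexLe n) f)
    (he : ∀ j : Fin n, epsL n (k j) j ∈ T) (hs : ∀ j : Fin n, sigL n j ∈ T)
    (hcomp : ∀ f ∈ T, ∀ g ∈ T, PComp f g ∈ T)
    (hinv : ∀ f ∈ T, ∀ g : Fin n × ℤ → Option (Fin n × ℤ),
      (∀ x y : Fin n × ℤ, f x = some y ↔ g y = some x) → g ∈ T) :
    ∀ f : Fin n × ℤ → Option (Fin n × ℤ), IOmap (lexLe n) f → f ∈ T := by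
  have hshT : ∀ c, shL n c ∈ T := by
    have hneg : ∀ c, shL n c ∈ T → shL n (-c) ∈ T := by
      intro c hc
      refine hinv _ hc _ ?_
      rintro ⟨x1, x2⟩ ⟨y1, y2⟩
      simp only [shL, Option.some.injEq, Prod.mk.injEq, Pi.neg_apply]
      constructor
      · rintro ⟨rfl, rfl⟩; simp
      · rintro ⟨rfl, rfl⟩; simp
    have hadd : ∀ c d, shL n c ∈ T → shL n d ∈ T → shL n (c + d) ∈ T := by
      intro c d hc hd
      have := hcomp _ hc _ hd
      convert this using 1
      funext x
      simp [PComp, shL, add_assoc]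
    have hone : ∀ j, shL n (Pi.single j 1) ∈ T := by
      intro j
      convert hs j using 1
      funext x
      obtain ⟨x1, x2⟩ := x
      simp only [shL, sigL]
      by_cases h : x1 = j
      · subst h; simp
      · simp [h]
    have hzero : shL n 0 ∈ T := by
      have := hadd _ _ (hone ⟨0, hn⟩) (hneg _ (hone ⟨0, hn⟩))
      rwa [add_neg_cancel] at this
    let G : AddSubgroup (Fin n → ℤ) :=
      { carrier := {c | shL n c ∈ T}
        add_mem' := fun {a b} ha hb => hadd a b ha hb
        zero_mem' := hzero
        neg_mem' := fun {a} ha => hneg a ha }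
    intro c
    have hc : c ∈ G := by
      rw [pi_eq_sum_univ' c]
      refine G.sum_mem ?_
      intro j _
      refine zsmul_mem (K := G) ?_ (c j)
      show shL n _ ∈ T
      have h := hone j
      convert h using 2
    exact hc
  have heT : ∀ a j, epsL n a j ∈ T := by
    intro a j
    have := hcomp _ (hshT (fun _ => k j - a)) _ (hcomp _ (he j) _ (hshT (fun _ => a - k j)))
    convert this using 1
    funext x
    obtain ⟨x1, x2⟩ := x
    simp only [PComp, shL, epsL, Option.bind_some]
    by_cases h : x1 = j ∧ a < x2
    · rw [if_pos h, if_pos ⟨h.1, by linarith [h.2]⟩]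
      simp; ring
    · rw [if_neg h, if_neg (fun h' => h ⟨h'.1, by linarith [h'.2]⟩)]
      simp; ring
  have hred := reduce_dom n T heT hcomp hinv
  have hsurj : ∀ f, IOmap (lexLe n) f → {y | ∀ x, f x ≠ some y} = ∅ → f ∈ T := by
    intro f hf hr
    refine hred ∅ ?_ _ f hf hr rfl
    intro f hf hr hd
    have : ∀ x, ∃ y, f x = some y := fun x => Option.ne_none_iff_exists'.1 (hd x)
    choose g hg using this
    obtain ⟨c, hc⟩ := base_aux n g (fun x y h => hf.1 (hg x) (by rw [hg y, h]))
      (fun y => by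
        by_contra hne
        push Not at hne
        have : y ∈ ({y | ∀ x, f x ≠ some y} : Set _) := by
          intro x hx
          rw [hg] at hx
          exact hne x (Option.some.inj hx)
        rw [hr] at this
        exact this)
      (fun x y h => hf.2.1 h (hg x) (hg y))
    have : f = shL n c := by
      funext x
      rw [hg, hc]; rfl
    rw [this]
    exact hshT c
  intro f hf
  refine hred _ ?_ _ f hf rfl rfl
  intro f hf _ hd
  have hsp := pinv_spec f hf.1
  refine hinv (pinv f) (hsurj _ (pinv_good n f hf) ?_) f (fun x y => (hsp y x).symm)
  ext y
  simp only [Set.mem_setOf_eq, Set.mem_empty_iff_false, iff_false]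
  intro h
  obtain ⟨b, hb⟩ := Option.ne_none_iff_exists'.1 (hd y)
  exact h b ((hsp _ _).1 hb)
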